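/- arXiv:1206.4691 — 3 statements merged into one kernel-verified Lean document; each statement's English description precedes it below -/
import Mathlib

section
/- For every real K ≠ 0 and every x ∈ ℝ, both values y₊ = (−K² − 2 + 2√(4K²x² + K² + 1))/(4K²) and y₋ = (−K² − 2 − 2√(4K²x² + K² + 1))/(4K²) satisfy y < x²; that is, every point of either curve is exterior to the parabolic region {(x,y) : y ≥ x²}. -/
open Real

/-!
Both branches lie on the curve `16 (x² - y) = K² (1 + 4 y)²`. Its right-hand side is nonnegative, so
a point of the curve could fail to be exterior only where the right-hand side vanishes, that is, on
the directrix `y = -1/4`; but the directrix is itself exterior to the parabola.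
-/

/-- The locus of points `(x, y)` from which the parabola `y = x²` is seen under an angle with
tangent `K`. The two tangent lines through `(x, y)` have as slopes the roots of
`m² - 4 x m + 4 y = 0`, so the angle between them has tangent `± 4 √(x² - y) / (1 + 4 y)`; the
equation is the squared form of this, and so does not distinguish `K` from `-K`. -/
def IsOnParabolaIsoptic {F : Type*} [Field F] (K x y : F) : Prop :=
  16 * (x ^ 2 - y) = K ^ 2 * (1 + 4 * y) ^ 2

theorem isOnParabolaIsoptic_iff_of_sq_eq {F : Type*} [Field F] [NeZero (2 : F)] {K x y s : F}
    (hK : K ≠ 0) (hs : s ^ 2 = 4 * K ^ 2 * x ^ 2 + K ^ 2 + 1) :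
    IsOnParabolaIsoptic K x y ↔
      y = (-K ^ 2 - 2 + 2 * s) / (4 * K ^ 2) ∨ y = (-K ^ 2 - 2 - 2 * s) / (4 * K ^ 2) := by
  have h_two : (2 : F) ≠ 0 := two_ne_zero
  have h_lead : 16 * K ^ 2 ≠ 0 := by
    rw [show (16 : F) = 2 ^ 4 by norm_num]
    exact mul_ne_zero (pow_ne_zero 4 h_two) (pow_ne_zero 2 hK)
  have h_discrim :
      discrim (16 * K ^ 2) (8 * K ^ 2 + 16) (K ^ 2 - 16 * x ^ 2) = 16 * s * (16 * s) := by
    unfold discrim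
    linear_combination -256 * hs
  have h_quadratic : IsOnParabolaIsoptic K x y ↔
      16 * K ^ 2 * (y * y) + (8 * K ^ 2 + 16) * y + (K ^ 2 - 16 * x ^ 2) = 0 := by
    unfold IsOnParabolaIsoptic
    constructor <;> intro h <;> linear_combination -h
  have h_plus : (-(8 * K ^ 2 + 16) + 16 * s) / (2 * (16 * K ^ 2)) =
      (-K ^ 2 - 2 + 2 * s) / (4 * K ^ 2) := by
    rw [← mul_div_mul_left _ (4 * K ^ 2) (pow_ne_zero 3 h_two)]
    ring_nf
  have h_minus : (-(8 * K ^ 2 + 16) - 16 * s) / (2 * (16 * K ^ 2)) =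
      (-K ^ 2 - 2 - 2 * s) / (4 * K ^ 2) := by
    rw [← mul_div_mul_left _ (4 * K ^ 2) (pow_ne_zero 3 h_two)]
    ring_nf
  rw [h_quadratic, quadratic_eq_zero_iff h_lead h_discrim, h_plus, h_minus]

theorem IsOnParabolaIsoptic.lt_sq {F : Type*} [Field F] [LinearOrder F] [IsStrictOrderedRing F]
    {K x y : F} (hK : K ≠ 0) (h : IsOnParabolaIsoptic K x y) : y < x ^ 2 := by
  by_contra! h_interior : x ^ 2 ≤ y
  have h_above_directrix : 0 < 1 + 4 * y := by linarith [sq_nonneg x]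
  have h_pos : 0 < 16 * (x ^ 2 - y) := by
    rw [show 16 * (x ^ 2 - y) = K ^ 2 * (1 + 4 * y) ^ 2 from h]
    positivity
  linarith

theorem branches_exterior_to_parabola (K : ℝ) (hK : K ≠ 0) (x : ℝ) :
    (-K ^ 2 - 2 + 2 * Real.sqrt (4 * K ^ 2 * x ^ 2 + K ^ 2 + 1)) / (4 * K ^ 2) < x ^ 2 ∧
    (-K ^ 2 - 2 - 2 * Real.sqrt (4 * K ^ 2 * x ^ 2 + K ^ 2 + 1)) / (4 * K ^ 2) < x ^ 2 := by
  have h_sqrt := Real.sq_sqrt (show 0 ≤ 4 * K ^ 2 * x ^ 2 + K ^ 2 + 1 by positivity)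
  have h_branches {y : ℝ} := isOnParabolaIsoptic_iff_of_sq_eq (y := y) hK h_sqrt
  exact ⟨(h_branches.2 (.inl rfl)).lt_sq hK, (h_branches.2 (.inr rfl)).lt_sq hK⟩
end

section
/- For every real K ≠ 0, the function f(x) = (−K² − 2 − 2√(4K²x² + K² + 1))/(4K²) satisfies lim_{x→+∞} f(x)/x = −1/|K| and lim_{x→−∞} f(x)/x = 1/|K|; that is, the curve y = f(x) has slant asymptotes with slopes ∓1/|K|. -/
open Real Filter

lemma tendsto_sqrt_div_of_tendsto_div_sq {α : Type*} {l : Filter α} {g u : α → ℝ} {a : ℝ}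
    (hu : ∀ᶠ x in l, 0 ≤ u x) (h : Tendsto (fun x => g x / u x ^ 2) l (nhds a)) :
    Tendsto (fun x => √(g x) / u x) l (nhds √a) := by
  refine h.sqrt.congr' ?_
  filter_upwards [hu] with x hx
  rw [sqrt_div' _ (sq_nonneg _), sqrt_sq hx]

lemma tendsto_mul_sq_add_div_sq_atTop {𝕜 : Type*} [Field 𝕜] [LinearOrder 𝕜]
    [IsStrictOrderedRing 𝕜] [TopologicalSpace 𝕜] [OrderTopology 𝕜] (a b : 𝕜) :
    Tendsto (fun x : 𝕜 => (a * x ^ 2 + b) / x ^ 2) atTop (nhds a) := by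
  have hb : Tendsto (fun x : 𝕜 => b / x ^ 2) atTop (nhds 0) :=
    tendsto_const_nhds.div_atTop (tendsto_pow_atTop two_ne_zero)
  have hab : Tendsto (fun x : 𝕜 => a + b / x ^ 2) atTop (nhds a) := by
    simpa only [add_zero] using hb.const_add a
  refine hab.congr' ?_
  filter_upwards [eventually_ne_atTop 0] with x hx
  rw [add_div, mul_div_cancel_right₀ a (pow_ne_zero 2 hx)]

lemma tendsto_add_mul_sqrt_mul_sq_add_div_atTop (p q a b : ℝ) :
    Tendsto (fun x : ℝ => (p + q * √(a * x ^ 2 + b)) / x) atTop (nhds (q * √a)) := by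
  have hp : Tendsto (fun x : ℝ => p / x) atTop (nhds 0) :=
    tendsto_const_nhds.div_atTop tendsto_id
  have hsqrt : Tendsto (fun x : ℝ => √(a * x ^ 2 + b) / x) atTop (nhds √a) :=
    tendsto_sqrt_div_of_tendsto_div_sq (eventually_ge_atTop 0)
      (tendsto_mul_sq_add_div_sq_atTop a b)
  simpa only [add_div, mul_div_assoc, zero_add] using hp.add (hsqrt.const_mul q)

lemma tendsto_div_atBot_of_even {𝕜 : Type*} [Field 𝕜] [LinearOrder 𝕜] [IsStrictOrderedRing 𝕜]
    [TopologicalSpace 𝕜] [ContinuousNeg 𝕜] {f : 𝕜 → 𝕜} {m : 𝕜} (hf : f.Even)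
    (h : Tendsto (fun x => f x / x) atTop (nhds m)) :
    Tendsto (fun x => f x / x) atBot (nhds (-m)) := by
  refine (h.comp tendsto_neg_atBot_atTop).neg.congr fun x => ?_
  rw [Function.comp_apply, hf x, div_neg, neg_neg]

/-- The branch `y = minusBranch K x` of the constant visibility angle curve
`16 (x² - y) = K² (1 + 4 y)²` of the parabola `y = x²` on which the square root in the quadratic
formula for `y` is subtracted. Here `K` is the tangent of the visibility angle; for `K = 0` the
value is the junk `0`. -/
noncomputable def minusBranch (K x : ℝ) : ℝ :=
  (-K ^ 2 - 2 - 2 * √(4 * K ^ 2 * x ^ 2 + K ^ 2 + 1)) / (4 * K ^ 2)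

lemma minusBranch_even (K : ℝ) : (minusBranch K).Even := fun x => by
  simp only [minusBranch, neg_sq]

lemma tendsto_minusBranch_div_atTop {K : ℝ} (hK : K ≠ 0) :
    Tendsto (fun x => minusBranch K x / x) atTop (nhds (-(1 / |K|))) := by
  have hsqrt : √(4 * K ^ 2) = 2 * |K| := by
    rw [show 4 * K ^ 2 = (2 * K) ^ 2 by ring, sqrt_sq_eq_abs, abs_mul, abs_two]
  have hslope : -2 / (4 * K ^ 2) * √(4 * K ^ 2) = -(1 / |K|) := by
    have hK' : |K| ≠ 0 := abs_ne_zero.mpr hK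
    rw [hsqrt, ← sq_abs K]
    field_simp
    norm_num
  rw [← hslope]
  refine (tendsto_add_mul_sqrt_mul_sq_add_div_atTop ((-K ^ 2 - 2) / (4 * K ^ 2))
    (-2 / (4 * K ^ 2)) (4 * K ^ 2) (K ^ 2 + 1)).congr fun x => ?_
  rw [minusBranch, add_assoc]
  ring

theorem minus_branch_slant_asymptotes (K : ℝ) (hK : K ≠ 0) :
    Tendsto
      (fun x : ℝ =>
        (-K ^ 2 - 2 - 2 * Real.sqrt (4 * K ^ 2 * x ^ 2 + K ^ 2 + 1)) / (4 * K ^ 2) / x)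
      atTop (nhds (-(1 / |K|))) ∧
    Tendsto
      (fun x : ℝ =>
        (-K ^ 2 - 2 - 2 * Real.sqrt (4 * K ^ 2 * x ^ 2 + K ^ 2 + 1)) / (4 * K ^ 2) / x)
      atBot (nhds (1 / |K|)) := by
  have h_top : Tendsto (fun x => minusBranch K x / x) atTop (nhds (-(1 / |K|))) :=
    tendsto_minusBranch_div_atTop hK
  have h_bot : Tendsto (fun x => minusBranch K x / x) atBot (nhds (1 / |K|)) :=
    neg_neg (1 / |K|) ▸ tendsto_div_atBot_of_even (minusBranch_even K) h_top
  exact ⟨h_top, h_bot⟩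
end

section
/- Let u, v be unit vectors in ℝ² with angle ϑ = ∠(u,v) ∈ (0, π), let O ∈ ℝ², and let W = {O + s·u + t·v : s, t ≥ 0} be the closed wedge with apex O and internal angle ϑ. If X = O − (s₀·u + t₀·v) with s₀ > 0 and t₀ > 0 (so X lies in the interior of the opposite wedge), then the aperture angle of X with respect to W equals ϑ, i.e. sup{∠(A − X, B − X) : A, B ∈ W} = ϑ. -/
open Real InnerProductGeometry

/-!
Seen from `X`, every point of the wedge lies in a direction of the closed cone spanned by `u` and
`v`. Inside this cone angles are additive, so two of its directions `p`, `q`, labelled in the order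
`u, p, q, v`, satisfy `∠(u, v) = ∠(u, p) + ∠(p, q) + ∠(q, v)`, whence `∠(p, q) ≤ ∠(u, v)`.
Conversely, points running to infinity along the two edges are seen from any fixed point `X` in
directions tending to `u` and `v`.
-/

section

open Filter Topology
open scoped EuclideanGeometry NNReal

theorem smul_add_smul_mem_span_pair_of_mul_le_mul {K M : Type*} [Semifield K] [LE K]
    [CanonicallyOrderedAdd K] [AddCommMonoid M] [Module K M] {a b x y : K} (ha : a ≠ 0)
    (h : b * x ≤ a * y) (u v : M) :
    x • u + y • v ∈ Submodule.span K {a • u + b • v, v} := by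
  obtain ⟨d, hd⟩ := exists_add_of_le h
  have hy : y = x / a * b + d / a := by
    rw [← mul_div_cancel_left₀ y ha, hd]
    ring
  refine Submodule.mem_span_pair.2 ⟨x / a, d / a, ?_⟩
  rw [hy, smul_add, smul_smul, smul_smul, div_mul_cancel₀ x ha, add_assoc, ← add_smul]

theorem mem_span_pair_or_mem_span_pair {K M : Type*} [Semifield K] [LinearOrder K]
    [CanonicallyOrderedAdd K] [AddCommMonoid M] [Module K M] {u v p q : M} (hp₀ : p ≠ 0)
    (hp : p ∈ Submodule.span K {u, v}) (hq : q ∈ Submodule.span K {u, v}) :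
    q ∈ Submodule.span K {p, v} ∨ q ∈ Submodule.span K {u, p} := by
  obtain ⟨a, b, rfl⟩ := Submodule.mem_span_pair.1 hp
  obtain ⟨x, y, rfl⟩ := Submodule.mem_span_pair.1 hq
  -- The sign of the determinant `a * y - b * x` tells on which side of `p` the vector `q` lies.
  have side : (a ≠ 0 ∧ b * x ≤ a * y) ∨ (b ≠ 0 ∧ a * y ≤ b * x) := by
    rcases eq_or_ne a 0 with rfl | ha
    · have hb : b ≠ 0 := by
        rintro rfl
        simp at hp₀
      exact .inr ⟨hb, by simp⟩
    rcases eq_or_ne b 0 with rfl | hb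
    · exact .inl ⟨ha, by simp⟩
    · exact (le_total (b * x) (a * y)).imp (.intro ha) (.intro hb)
  refine side.imp (fun ⟨ha, h⟩ => smul_add_smul_mem_span_pair_of_mul_le_mul ha h u v) ?_
  rintro ⟨hb, h⟩
  rw [Set.pair_comm, add_comm (x • u), add_comm (a • u)]
  exact smul_add_smul_mem_span_pair_of_mul_le_mul hb h v u

theorem smul_add_smul_mem_span_pair_nnreal {M : Type*} [AddCommMonoid M] [Module ℝ M] {s t : ℝ}
    (hs : 0 ≤ s) (ht : 0 ≤ t) (u v : M) : s • u + t • v ∈ Submodule.span ℝ≥0 {u, v} :=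
  Submodule.mem_span_pair.2 ⟨⟨s, hs⟩, ⟨t, ht⟩, rfl⟩

variable {V : Type*} [NormedAddCommGroup V] [InnerProductSpace ℝ V]

theorem angle_le_angle_of_mem_span {u v p q : V} (hp₀ : p ≠ 0) (hq₀ : q ≠ 0)
    (hp : p ∈ Submodule.span ℝ≥0 {u, v}) (hq : q ∈ Submodule.span ℝ≥0 {u, v}) :
    angle p q ≤ angle u v := by
  have split_at_p : angle u v = angle u p + angle p v :=
    angle_eq_angle_add_add_angle_add_of_mem_span hp₀ hp
  rcases mem_span_pair_or_mem_span_pair hp₀ hp hq with hpv | hup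
  · have split_at_q : angle p v = angle p q + angle q v :=
      angle_eq_angle_add_add_angle_add_of_mem_span hq₀ hpv
    linarith [angle_nonneg u p, angle_nonneg q v]
  · have split_at_q : angle u p = angle u q + angle q p :=
      angle_eq_angle_add_add_angle_add_of_mem_span hq₀ hup
    linarith [angle_nonneg u q, angle_nonneg p v, angle_comm p q]

theorem angle_eq_pi_of_mem_span_of_neg_mem_span {u v w : V} (hw₀ : w ≠ 0)
    (hw : w ∈ Submodule.span ℝ≥0 {u, v}) (hw_neg : -w ∈ Submodule.span ℝ≥0 {u, v}) :
    angle u v = π := by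
  refine (angle_le_pi u v).antisymm ?_
  rw [← angle_self_neg_of_nonzero hw₀]
  exact angle_le_angle_of_mem_span hw₀ (neg_ne_zero.2 hw₀) hw hw_neg

theorem angle_add_add_le_angle_of_mem_span {u v w p q : V} (hw₀ : w ≠ 0)
    (hw : w ∈ Submodule.span ℝ≥0 {u, v}) (hp : p ∈ Submodule.span ℝ≥0 {u, v})
    (hq : q ∈ Submodule.span ℝ≥0 {u, v}) :
    angle (p + w) (q + w) ≤ angle u v := by
  by_cases hπ : angle u v = π
  · exact hπ ▸ angle_le_pi _ _
  have add_ne_zero {r : V} (hr : r ∈ Submodule.span ℝ≥0 {u, v}) : r + w ≠ 0 := fun h =>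
    hπ (angle_eq_pi_of_mem_span_of_neg_mem_span hw₀ hw (eq_neg_of_add_eq_zero_left h ▸ hr))
  exact angle_le_angle_of_mem_span (add_ne_zero hp) (add_ne_zero hq) (add_mem hp hw)
    (add_mem hq hw)

theorem smul_add_smul_ne_zero_of_angle_ne_pi {u v : V} (hu : u ≠ 0) (huv : angle u v ≠ π)
    {s t : ℝ} (hs : 0 < s) (ht : 0 < t) : s • u + t • v ≠ 0 := by
  intro h
  apply huv
  calc angle u v = angle (s • u) (t • v) := by
        rw [angle_smul_left_of_pos _ _ hs, angle_smul_right_of_pos _ _ ht]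
    _ = angle (s • u) (-(s • u)) := by rw [eq_neg_of_add_eq_zero_right h]
    _ = π := angle_self_neg_of_nonzero (smul_ne_zero hs.ne' hu)

theorem tendsto_angle {ι : Type*} {l : Filter ι} {f g : ι → V} {u v : V} (hu : u ≠ 0) (hv : v ≠ 0)
    (hf : Tendsto f l (𝓝 u)) (hg : Tendsto g l (𝓝 v)) :
    Tendsto (fun i => angle (f i) (g i)) l (𝓝 (angle u v)) :=
  (continuousAt_angle (x := (u, v)) hu hv).tendsto.comp (f := fun i => (f i, g i))
    (hf.prodMk_nhds hg)

theorem tendsto_angle_smul_add_atTop {u v : V} (hu : u ≠ 0) (hv : v ≠ 0) (p q : V) :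
    Tendsto (fun r : ℝ => angle (r • u + p) (r • v + q)) atTop (𝓝 (angle u v)) := by
  have tendsto_direction (x y : V) : Tendsto (fun r : ℝ => x + r⁻¹ • y) atTop (𝓝 x) := by
    simpa only [zero_smul, add_zero] using
      ((tendsto_inv_atTop_zero (𝕜 := ℝ)).smul_const y).const_add x
  refine (tendsto_angle hu hv (tendsto_direction u p) (tendsto_direction v q)).congr' ?_
  filter_upwards [eventually_gt_atTop 0] with r hr
  rw [← angle_smul_smul hr.ne', smul_add, smul_add, smul_inv_smul₀ hr.ne', smul_inv_smul₀ hr.ne']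

variable {P : Type*} [MetricSpace P] [NormedAddTorsor V P]

/-- The aperture (visibility) angle of the point `X` with respect to the set `Q`: the supremum of
the angles under which pairs of points of `Q` are seen from `X`. For `X ∈ Q`, the pairs
containing `X` contribute the junk value `π / 2`. -/
noncomputable def apertureAngle (Q : Set P) (X : P) : ℝ :=
  sSup {θ : ℝ | ∃ A ∈ Q, ∃ B ∈ Q, θ = ∠ A X B}

theorem angle_le_apertureAngle {Q : Set P} {A B : P} (hA : A ∈ Q) (hB : B ∈ Q) (X : P) :
    ∠ A X B ≤ apertureAngle Q X := by
  refine le_csSup ⟨π, ?_⟩ ⟨A, hA, B, hB, rfl⟩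
  rintro _ ⟨A', -, B', -, rfl⟩
  exact EuclideanGeometry.angle_le_pi A' X B'

theorem apertureAngle_le {Q : Set P} (hQ : Q.Nonempty) {X : P} {θ : ℝ}
    (h : ∀ A ∈ Q, ∀ B ∈ Q, ∠ A X B ≤ θ) : apertureAngle Q X ≤ θ := by
  obtain ⟨A, hA⟩ := hQ
  refine csSup_le ⟨_, A, hA, A, hA, rfl⟩ ?_
  rintro _ ⟨B, hB, C, hC, rfl⟩
  exact h B hB C hC

/-- The closed wedge with apex `O` and edges in the directions `u` and `v`, given as the set of
points whose displacement from `O` lies in the convex cone generated by `u` and `v`. -/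
def wedge (O : P) (u v : V) : Set P :=
  {A | A -ᵥ O ∈ Submodule.span ℝ≥0 {u, v}}

theorem wedge_eq_setOf (O u v : V) :
    wedge O u v = {A | ∃ s t : ℝ, 0 ≤ s ∧ 0 ≤ t ∧ A = O + s • u + t • v} := by
  ext A
  constructor
  · intro hA
    obtain ⟨s, t, hst⟩ := Submodule.mem_span_pair.1 hA
    refine ⟨s, t, s.2, t.2, ?_⟩
    rw [add_assoc, ← sub_eq_iff_eq_add']
    exact hst.symm
  · rintro ⟨s, t, hs, ht, rfl⟩
    simpa [wedge, add_assoc] using smul_add_smul_mem_span_pair_nnreal hs ht u v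

theorem apertureAngle_wedge_le {u v : V} {O X : P}
    (hX : O -ᵥ X ∈ Submodule.span ℝ≥0 {u, v}) (hXO : X ≠ O) :
    apertureAngle (wedge O u v) X ≤ angle u v := by
  refine apertureAngle_le ⟨O, by simp [wedge]⟩ fun A hA B hB => ?_
  rw [EuclideanGeometry.angle, ← vsub_add_vsub_cancel A O X, ← vsub_add_vsub_cancel B O X]
  exact angle_add_add_le_angle_of_mem_span (vsub_ne_zero.2 hXO.symm) hX hA hB

theorem angle_le_apertureAngle_wedge {u v : V} (hu : u ≠ 0) (hv : v ≠ 0) (O X : P) :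
    angle u v ≤ apertureAngle (wedge O u v) X := by
  refine le_of_tendsto (tendsto_angle_smul_add_atTop hu hv (O -ᵥ X) (O -ᵥ X)) ?_
  filter_upwards [eventually_ge_atTop 0] with r hr
  have left_mem : r • u +ᵥ O ∈ wedge O u v := by
    simpa [wedge] using smul_add_smul_mem_span_pair_nnreal hr le_rfl u v
  have right_mem : r • v +ᵥ O ∈ wedge O u v := by
    simpa [wedge] using smul_add_smul_mem_span_pair_nnreal le_rfl hr u v
  simpa only [EuclideanGeometry.angle, vadd_vsub_assoc] using
    angle_le_apertureAngle left_mem right_mem X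

theorem aperture_angle_in_opposite_wedge_general {u v : V} (hu : u ≠ 0) (hv : v ≠ 0) {O X : P}
    (hX : O -ᵥ X ∈ Submodule.span ℝ≥0 {u, v}) (hXO : X ≠ O) :
    apertureAngle (wedge O u v) X = angle u v :=
  (apertureAngle_wedge_le hX hXO).antisymm (angle_le_apertureAngle_wedge hu hv O X)

end

theorem aperture_angle_in_opposite_wedge
    (u v : EuclideanSpace ℝ (Fin 2)) (hu : ‖u‖ = 1) (hv : ‖v‖ = 1)
    (ϑ : ℝ) (hϑ : ϑ = InnerProductGeometry.angle u v) (hϑ0 : 0 < ϑ) (hϑπ : ϑ < π)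
    (O : EuclideanSpace ℝ (Fin 2))
    (W : Set (EuclideanSpace ℝ (Fin 2)))
    (hW : W = {P | ∃ s t : ℝ, 0 ≤ s ∧ 0 ≤ t ∧ P = O + s • u + t • v})
    (s₀ t₀ : ℝ) (hs₀ : 0 < s₀) (ht₀ : 0 < t₀)
    (X : EuclideanSpace ℝ (Fin 2)) (hX : X = O - (s₀ • u + t₀ • v)) :
    sSup {θ : ℝ | ∃ A ∈ W, ∃ B ∈ W,
        θ = InnerProductGeometry.angle (A - X) (B - X)} = ϑ := by
  have hu₀ : u ≠ 0 := ne_zero_of_norm_ne_zero (by simp [hu])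
  have hv₀ : v ≠ 0 := ne_zero_of_norm_ne_zero (by simp [hv])
  subst hϑ hX
  rw [hW, ← wedge_eq_setOf]
  refine aperture_angle_in_opposite_wedge_general hu₀ hv₀ ?_ ?_
  · simpa using smul_add_smul_mem_span_pair_nnreal hs₀.le ht₀.le u v
  · simpa using smul_add_smul_ne_zero_of_angle_ne_pi hu₀ hϑπ.ne hs₀ ht₀
end
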